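/- Let c > 0. For each positive integer k, let X_k and Y_k be independent random variables each having the Gamma distribution with shape k and rate c. Then the sequence E[X_k/(2X_k + Y_k)] converges to 1/3 as k → ∞. -/

import Mathlib

open MeasureTheory ProbabilityTheory Real Filter

/-! The ratio `x / (p * x + q * y)` is homogeneous of degree zero and equals `1 / (p + q)` on the
diagonal, from which it departs by at most a constant times the relative deviations of `x` and `y`
from any common reference point. Gamma variables of shape `a` and rate `r` have mean `a / r` and
standard deviation `√a / r`, so the reference point `a / r` puts the expected ratio within a
constant multiple of `1 / √a` of `1 / (p + q)`. -/

section GammaMoments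

variable {E : Type*} [NormedAddCommGroup E] [NormedSpace ℝ E] {a r : ℝ}

lemma measurable_gammaPDF (a r : ℝ) : Measurable (gammaPDF a r) :=
  (measurable_gammaPDFReal a r).ennreal_ofReal

lemma mul_gammaPDFReal (ha : a ≠ 0) (hr : r ≠ 0) (x : ℝ) :
    x * gammaPDFReal a r x = a / r * gammaPDFReal (a + 1) r x := by
  rcases lt_or_ge x 0 with hx | hx
  · simp [gammaPDFReal, hx.not_ge]
  · have hpow : x ^ a = x * x ^ (a - 1) := by
      rw [mul_comm, ← rpow_add_one' hx (by simpa using ha), sub_add_cancel]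
    simp only [gammaPDFReal, if_pos hx, add_sub_cancel_right, hpow, rpow_add_one hr,
      Gamma_add_one ha]
    field_simp

lemma integrable_gammaMeasure_iff (ha : 0 < a) (hr : 0 < r) {f : ℝ → E} :
    Integrable f (gammaMeasure a r) ↔ Integrable fun x ↦ gammaPDFReal a r x • f x := by
  rw [gammaMeasure, integrable_withDensity_iff_integrable_smul'
    (measurable_gammaPDF a r) (ae_of_all _ fun _ ↦ ENNReal.ofReal_lt_top)]
  simp only [gammaPDF, ENNReal.toReal_ofReal (gammaPDFReal_nonneg ha hr _)]

lemma integral_gammaMeasure (ha : 0 < a) (hr : 0 < r) (f : ℝ → E) :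
    ∫ x, f x ∂gammaMeasure a r = ∫ x, gammaPDFReal a r x • f x := by
  rw [gammaMeasure, integral_withDensity_eq_integral_toReal_smul
    (measurable_gammaPDF a r) (ae_of_all _ fun _ ↦ ENNReal.ofReal_lt_top)]
  simp only [gammaPDF, ENNReal.toReal_ofReal (gammaPDFReal_nonneg ha hr _)]

lemma gammaPDFReal_smul_smul (ha : a ≠ 0) (hr : r ≠ 0) (f : ℝ → E) (x : ℝ) :
    gammaPDFReal a r x • x • f x = (a / r) • gammaPDFReal (a + 1) r x • f x := by
  rw [smul_smul, smul_smul, mul_comm, mul_gammaPDFReal ha hr]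

lemma integrable_smul_gammaMeasure_iff (ha : 0 < a) (hr : 0 < r) {f : ℝ → E} :
    Integrable (fun x ↦ x • f x) (gammaMeasure a r) ↔ Integrable f (gammaMeasure (a + 1) r) := by
  rw [integrable_gammaMeasure_iff ha hr, integrable_gammaMeasure_iff (by positivity) hr]
  simp only [gammaPDFReal_smul_smul ha.ne' hr.ne']
  exact integrable_fun_smul_iff (div_pos ha hr).ne' _

lemma integral_smul_gammaMeasure (ha : 0 < a) (hr : 0 < r) (f : ℝ → E) :
    ∫ x, x • f x ∂gammaMeasure a r = (a / r) • ∫ x, f x ∂gammaMeasure (a + 1) r := by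
  rw [integral_gammaMeasure ha hr, integral_gammaMeasure (by positivity) hr, ← integral_smul]
  simp only [gammaPDFReal_smul_smul ha.ne' hr.ne']

lemma integrable_id_gammaMeasure (ha : 0 < a) (hr : 0 < r) :
    Integrable (fun x ↦ x) (gammaMeasure a r) := by
  have := isProbabilityMeasure_gammaMeasure (add_pos ha one_pos) hr
  simpa using (integrable_smul_gammaMeasure_iff ha hr).2 (integrable_const (1 : ℝ))

lemma integral_id_gammaMeasure (ha : 0 < a) (hr : 0 < r) :
    ∫ x, x ∂gammaMeasure a r = a / r := by
  have := isProbabilityMeasure_gammaMeasure (add_pos ha one_pos) hr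
  simpa using integral_smul_gammaMeasure ha hr fun _ ↦ (1 : ℝ)

lemma memLp_two_id_gammaMeasure (ha : 0 < a) (hr : 0 < r) :
    MemLp id 2 (gammaMeasure a r) := by
  rw [memLp_two_iff_integrable_sq aestronglyMeasurable_id]
  simpa [sq] using (integrable_smul_gammaMeasure_iff ha hr).2
    (integrable_id_gammaMeasure (add_pos ha one_pos) hr)

lemma variance_id_gammaMeasure (ha : 0 < a) (hr : 0 < r) :
    Var[id; gammaMeasure a r] = a / r ^ 2 := by
  have := isProbabilityMeasure_gammaMeasure ha hr
  have second_moment : ∫ x, x ^ 2 ∂gammaMeasure a r = a / r * ((a + 1) / r) := by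
    simpa [sq, integral_id_gammaMeasure (add_pos ha one_pos) hr] using
      integral_smul_gammaMeasure ha hr id
  rw [variance_eq_sub (memLp_two_id_gammaMeasure ha hr)]
  simp only [Pi.pow_apply, id_eq, second_moment, integral_id_gammaMeasure ha hr]
  ring

lemma ae_nonneg_gammaMeasure (a r : ℝ) : ∀ᵐ x ∂gammaMeasure a r, 0 ≤ x := by
  rw [gammaMeasure, ae_withDensity_iff (measurable_gammaPDF a r)]
  exact ae_of_all _ fun x hx ↦ le_of_not_gt fun hneg ↦ hx (gammaPDF_of_neg hneg)

end GammaMoments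

section MeanAbsoluteDeviation

variable {Ω : Type*} {mΩ : MeasurableSpace Ω} {P : Measure Ω} {X : Ω → ℝ}

lemma integral_abs_sub_integral_le_sqrt_variance [IsProbabilityMeasure P] (hX : MemLp X 2 P) :
    ∫ ω, |X ω - P[X]| ∂P ≤ √Var[X; P] := by
  have hdev : MemLp (fun ω ↦ |X ω - P[X]|) 2 P := (hX.sub (memLp_const _)).abs
  apply le_sqrt_of_sq_le
  calc (∫ ω, |X ω - P[X]| ∂P) ^ 2
      ≤ ∫ ω, |X ω - P[X]| ^ 2 ∂P :=
        sub_nonneg.1 ((variance_nonneg _ P).trans_eq (variance_eq_sub hdev))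
    _ = Var[X; P] := by simp only [sq_abs, variance_eq_integral hX.aemeasurable]

lemma integral_abs_sub_le_of_hasLaw_gammaMeasure {a r : ℝ} (ha : 0 < a) (hr : 0 < r)
    (hX : HasLaw X (gammaMeasure a r) P) :
    ∫ ω, |X ω - a / r| ∂P ≤ √a / r := by
  have := isProbabilityMeasure_gammaMeasure ha hr
  have mad_le := integral_abs_sub_integral_le_sqrt_variance (memLp_two_id_gammaMeasure ha hr)
  simp only [id_eq, integral_id_gammaMeasure ha hr, variance_id_gammaMeasure ha hr,
    sqrt_div ha.le, sqrt_sq hr.le] at mad_le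
  exact (hX.integral_comp (f := fun x ↦ |x - a / r|) (by fun_prop)).trans_le mad_le

end MeanAbsoluteDeviation

section Ratio

variable {p q : ℝ}

lemma div_mul_add_mul_le_one_div {x y : ℝ} (hp : 0 < p) (hq : 0 ≤ q) (hx : 0 ≤ x) (hy : 0 ≤ y) :
    x / (p * x + q * y) ≤ 1 / p := by
  apply div_le_of_le_mul₀ (by positivity) (by positivity)
  rw [one_div, mul_add, inv_mul_cancel_left₀ hp.ne']
  exact le_add_of_nonneg_right (by positivity)

lemma abs_div_mul_add_mul_sub_le {x y m : ℝ} (hp : 0 < p) (hq : 0 ≤ q) (hx : 0 ≤ x) (hy : 0 ≤ y)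
    (hm : 0 < m) :
    |x / (p * x + q * y) - 1 / (p + q)| ≤ (2 * |x - m| + q / p * |y - m|) / ((p + q) * m) := by
  set w := x / (p * x + q * y)
  have hw_nonneg : 0 ≤ w := by positivity
  have hw_le : w ≤ 1 / p := div_mul_add_mul_le_one_div hp hq hx hy
  have hw_mul : w * (p * x + q * y) = x := by
    refine div_mul_cancel_of_imp fun h ↦ ?_
    have hpx : p * x = 0 :=
      ((add_eq_zero_iff_of_nonneg (mul_nonneg hp.le hx) (mul_nonneg hq hy)).1 h).1
    exact (mul_eq_zero.1 hpx).resolve_left hp.ne'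
  have hdecomp : (w - 1 / (p + q)) * ((p + q) * m)
      = (x - m) - w * (p * (x - m) + q * (y - m)) := by
    field_simp
    linear_combination hw_mul
  rw [le_div_iff₀ (by positivity), ← abs_of_pos (show 0 < (p + q) * m by positivity), ← abs_mul,
    hdecomp]
  calc |(x - m) - w * (p * (x - m) + q * (y - m))|
      ≤ |x - m| + |w * (p * (x - m) + q * (y - m))| := abs_sub _ _
    _ = |x - m| + w * |p * (x - m) + q * (y - m)| := by rw [abs_mul, abs_of_nonneg hw_nonneg]
    _ ≤ |x - m| + 1 / p * (p * |x - m| + q * |y - m|) := by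
        gcongr
        refine (abs_add_le _ _).trans_eq ?_
        rw [abs_mul, abs_mul, abs_of_pos hp, abs_of_nonneg hq]
    _ = 2 * |x - m| + q / p * |y - m| := by field_simp; ring

variable {Ω : Type*} {mΩ : MeasurableSpace Ω} {P : Measure Ω} {X Y : Ω → ℝ}

lemma integrable_div_mul_add_mul [IsFiniteMeasure P] (hp : 0 < p) (hq : 0 ≤ q)
    (hXm : AEMeasurable X P) (hYm : AEMeasurable Y P)
    (hX : ∀ᵐ ω ∂P, 0 ≤ X ω) (hY : ∀ᵐ ω ∂P, 0 ≤ Y ω) :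
    Integrable (fun ω ↦ X ω / (p * X ω + q * Y ω)) P := by
  refine Integrable.of_bound
    (show AEMeasurable _ P by fun_prop).aestronglyMeasurable (1 / p) ?_
  filter_upwards [hX, hY] with ω hx hy
  rw [norm_of_nonneg (by positivity)]
  exact div_mul_add_mul_le_one_div hp hq hx hy

lemma abs_integral_div_mul_add_mul_sub_le [IsProbabilityMeasure P] {m : ℝ} (hp : 0 < p) (hq : 0 ≤ q)
    (hm : 0 < m) (hXi : Integrable X P) (hYi : Integrable Y P)
    (hX : ∀ᵐ ω ∂P, 0 ≤ X ω) (hY : ∀ᵐ ω ∂P, 0 ≤ Y ω) :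
    |∫ ω, X ω / (p * X ω + q * Y ω) ∂P - 1 / (p + q)| ≤
      (2 * ∫ ω, |X ω - m| ∂P + q / p * ∫ ω, |Y ω - m| ∂P) / ((p + q) * m) := by
  have hratio := integrable_div_mul_add_mul hp hq hXi.aemeasurable hYi.aemeasurable hX hY
  have hXdev : Integrable (fun ω ↦ 2 * |X ω - m|) P :=
    (hXi.sub (integrable_const m)).abs.const_mul 2
  have hYdev : Integrable (fun ω ↦ q / p * |Y ω - m|) P :=
    (hYi.sub (integrable_const m)).abs.const_mul (q / p)
  calc |∫ ω, X ω / (p * X ω + q * Y ω) ∂P - 1 / (p + q)|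
      = |∫ ω, (X ω / (p * X ω + q * Y ω) - 1 / (p + q)) ∂P| := by
        simp [integral_sub hratio (integrable_const _)]
    _ ≤ ∫ ω, |X ω / (p * X ω + q * Y ω) - 1 / (p + q)| ∂P := abs_integral_le_integral_abs
    _ ≤ ∫ ω, (2 * |X ω - m| + q / p * |Y ω - m|) / ((p + q) * m) ∂P := by
        refine integral_mono_ae (hratio.sub (integrable_const _)).abs
          ((hXdev.add hYdev).div_const _) ?_
        filter_upwards [hX, hY] with ω hx hy using abs_div_mul_add_mul_sub_le hp hq hx hy hm
    _ = (2 * ∫ ω, |X ω - m| ∂P + q / p * ∫ ω, |Y ω - m| ∂P) / ((p + q) * m) := by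
        rw [integral_div, integral_add hXdev hYdev, integral_const_mul, integral_const_mul]

lemma abs_integral_div_mul_add_mul_sub_le_of_hasLaw_gammaMeasure {a r : ℝ} (hp : 0 < p) (hq : 0 ≤ q)
    (ha : 0 < a) (hr : 0 < r)
    (hX : HasLaw X (gammaMeasure a r) P) (hY : HasLaw Y (gammaMeasure a r) P) :
    |∫ ω, X ω / (p * X ω + q * Y ω) ∂P - 1 / (p + q)| ≤ (2 + q / p) / (p + q) / √a := by
  have := isProbabilityMeasure_gammaMeasure ha hr
  have := hX.isProbabilityMeasure
  have hint := integrable_id_gammaMeasure ha hr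
  have hnonneg := ae_nonneg_gammaMeasure a r
  calc |∫ ω, X ω / (p * X ω + q * Y ω) ∂P - 1 / (p + q)|
      ≤ (2 * ∫ ω, |X ω - a / r| ∂P + q / p * ∫ ω, |Y ω - a / r| ∂P) / ((p + q) * (a / r)) :=
        abs_integral_div_mul_add_mul_sub_le hp hq (div_pos ha hr)
          ((hX.map_eq ▸ hint).comp_aemeasurable hX.aemeasurable)
          ((hY.map_eq ▸ hint).comp_aemeasurable hY.aemeasurable)
          (ae_of_ae_map hX.aemeasurable (hX.map_eq ▸ hnonneg))
          (ae_of_ae_map hY.aemeasurable (hY.map_eq ▸ hnonneg))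
    _ ≤ (2 * (√a / r) + q / p * (√a / r)) / ((p + q) * (a / r)) := by
        gcongr
        · exact integral_abs_sub_le_of_hasLaw_gammaMeasure ha hr hX
        · exact integral_abs_sub_le_of_hasLaw_gammaMeasure ha hr hY
    _ = (2 + q / p) / (p + q) * (√a / a) := by field_simp
    _ = (2 + q / p) / (p + q) / √a := by rw [sqrt_div_self', mul_one_div]

end Ratio

theorem reordering_probability_limit_general {ι : Type*} {l : Filter ι} {Ω : ι → Type*}
    {mΩ : ∀ i, MeasurableSpace (Ω i)} {P : ∀ i, Measure (Ω i)} {X Y : ∀ i, Ω i → ℝ}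
    {a r : ι → ℝ} {p q : ℝ} (hp : 0 < p) (hq : 0 ≤ q)
    (ha : Tendsto a l atTop) (hr : ∀ᶠ i in l, 0 < r i)
    (hX : ∀ᶠ i in l, HasLaw (X i) (gammaMeasure (a i) (r i)) (P i))
    (hY : ∀ᶠ i in l, HasLaw (Y i) (gammaMeasure (a i) (r i)) (P i)) :
    Tendsto (fun i ↦ ∫ ω, X i ω / (p * X i ω + q * Y i ω) ∂P i) l (nhds (1 / (p + q))) := by
  have error_tendsto : Tendsto (fun i ↦ (2 + q / p) / (p + q) / √(a i)) l (nhds 0) :=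
    (tendsto_sqrt_atTop.comp ha).const_div_atTop _
  rw [tendsto_iff_norm_sub_tendsto_zero]
  refine squeeze_zero' (Eventually.of_forall fun _ ↦ norm_nonneg _) ?_ error_tendsto
  filter_upwards [ha.eventually_gt_atTop 0, hr, hX, hY] with i hai hri hXi hYi
  exact abs_integral_div_mul_add_mul_sub_le_of_hasLaw_gammaMeasure hp hq hai hri hXi hYi

/-- The limit of the reordering probabilities `P_{k,k}` in the standard network:
if `X_k, Y_k` are independent Gamma(k, c) random variables, then
`E[X_k/(2X_k + Y_k)] → 1/3` as `k → ∞`. -/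
theorem reordering_probability_limit
    {Ω : Type*} [MeasureSpace Ω] [IsProbabilityMeasure (ℙ : Measure Ω)]
    (c : ℝ) (hc : 0 < c)
    (X Y : ℕ → Ω → ℝ)
    (hXm : ∀ k, Measurable (X k)) (hYm : ∀ k, Measurable (Y k))
    (hX : ∀ k, 1 ≤ k → Measure.map (X k) ℙ = gammaMeasure k c)
    (hY : ∀ k, 1 ≤ k → Measure.map (Y k) ℙ = gammaMeasure k c)
    (hind : ∀ k, 1 ≤ k → IndepFun (X k) (Y k) ℙ) :
    Tendsto (fun k => ∫ ω, X k ω / (2 * X k ω + Y k ω) ∂ℙ) atTop (nhds (1 / 3)) := by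
  have h := reordering_probability_limit_general two_pos zero_le_one tendsto_natCast_atTop_atTop
    (.of_forall fun _ ↦ hc)
    ((eventually_ge_atTop 1).mono fun k hk ↦ ⟨(hXm k).aemeasurable, hX k hk⟩)
    ((eventually_ge_atTop 1).mono fun k hk ↦ ⟨(hYm k).aemeasurable, hY k hk⟩)
  simpa only [one_mul, two_add_one_eq_three] using h
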